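/- For p ≥ 2 and n ≥ 0, the natural representation of SO(p+1, ℝ) on the space of spherical harmonics of degree n on S^p (i.e., restrictions to S^p of homogeneous harmonic polynomials of degree n in ℝ^{p+1}) is irreducible. -/

import Mathlib

open MvPolynomial

/-- The Laplacian on polynomials in `p+1` variables, as a linear map. -/
noncomputable def polyLaplacian (p : ℕ) :
    MvPolynomial (Fin (p + 1)) ℝ →ₗ[ℝ] MvPolynomial (Fin (p + 1)) ℝ :=
  ∑ j : Fin (p + 1),
    ((pderiv j).toLinearMap ∘ₗ (pderiv j).toLinearMap)

/-- The space of homogeneous harmonic polynomials of degree `n` in `p+1` real variables; its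
restriction to the unit sphere `S^p` is the space of spherical harmonics of degree `n` (the
restriction map is injective). -/
noncomputable def harmonicHomogeneous (p n : ℕ) :
    Submodule ℝ (MvPolynomial (Fin (p + 1)) ℝ) :=
  LinearMap.ker (polyLaplacian p) ⊓ homogeneousSubmodule (Fin (p + 1)) ℝ n

/-- The natural action of a matrix `M` on polynomials on `ℝ^{p+1}`, by linear substitution of
the variables: `(M • f)(x) = f(Mᵀ x)`; for `M` in the orthogonal group this is the natural
(unitary) action `f ↦ f ∘ M⁻¹` up to relabeling by the inverse. -/
noncomputable def matrixAct (p : ℕ) (M : Matrix (Fin (p + 1)) (Fin (p + 1)) ℝ) :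
    MvPolynomial (Fin (p + 1)) ℝ →ₐ[ℝ] MvPolynomial (Fin (p + 1)) ℝ :=
  aeval (fun i => ∑ j : Fin (p + 1), C (M i j) * X j)

section Aux

open Matrix

/-- Chain rule for a derivation composed with polynomial substitution. -/
lemma aux_chain {p : ℕ} {A : Type*} [CommRing A] [Algebra ℝ A] (D : Derivation ℝ A A)
    (g : Fin (p + 1) → A) (f : MvPolynomial (Fin (p + 1)) ℝ) :
    D (aeval g f) = ∑ i, aeval g (pderiv i f) * D (g i) := by
  classical
  induction f using MvPolynomial.induction_on with
  | C a => simp [MvPolynomial.algebraMap_eq]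
  | add f h hf hh => simp [hf, hh, add_mul, Finset.sum_add_distrib]
  | mul_X f j hf =>
    simp only [map_mul, aeval_X, Derivation.leibniz, hf, smul_eq_mul, map_add, add_mul,
      Finset.sum_add_distrib, pderiv_X, Finset.mul_sum]
    congr 1
    · rw [Finset.sum_eq_single j]
      · simp
      · intro b _ hb
        simp [Pi.single_apply, hb.symm]
      · simp
    · refine Finset.sum_congr rfl fun i _ => by ring

lemma aux_pderiv_comm {p : ℕ} (i j : Fin (p + 1)) (f : MvPolynomial (Fin (p + 1)) ℝ) :
    pderiv i (pderiv j f) = pderiv j (pderiv i f) := by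
  classical
  induction f using MvPolynomial.induction_on with
  | C a => simp
  | add f h hf hh => simp [hf, hh]
  | mul_X f k hf =>
    simp only [Derivation.leibniz, smul_eq_mul, map_add, hf, pderiv_X]
    have h1 : ∀ a b : Fin (p + 1), pderiv a ((Pi.single b 1 : Fin (p + 1) → MvPolynomial (Fin (p + 1)) ℝ) k) = 0 := by
      intro a b
      by_cases h : k = b
      · subst h; simp
      · simp [Pi.single_apply, h]
    rw [h1, h1]
    ring

lemma aux_lap {p : ℕ} (f : MvPolynomial (Fin (p + 1)) ℝ) :
    polyLaplacian p f = ∑ j, pderiv j (pderiv j f) := by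
  simp [polyLaplacian, LinearMap.sum_apply]

lemma aux_lap_pderiv {p : ℕ} (i : Fin (p + 1)) (f : MvPolynomial (Fin (p + 1)) ℝ) :
    polyLaplacian p (pderiv i f) = pderiv i (polyLaplacian p f) := by
  simp only [aux_lap, map_sum]
  refine Finset.sum_congr rfl fun j _ => ?_
  rw [aux_pderiv_comm j i f, aux_pderiv_comm j i]

lemma aux_eval_act {p : ℕ} (M : Matrix (Fin (p + 1)) (Fin (p + 1)) ℝ)
    (f : MvPolynomial (Fin (p + 1)) ℝ) (x : Fin (p + 1) → ℝ) :
    eval x (matrixAct p M f) = eval (M *ᵥ x) f := by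
  induction f using MvPolynomial.induction_on with
  | C a => simp [matrixAct]
  | add f h hf hh => simp [hf, hh]
  | mul_X f k hf =>
    rw [map_mul, map_mul, hf, map_mul]
    simp [matrixAct, mulVec, dotProduct]

lemma aux_pderiv_act {p : ℕ} (M : Matrix (Fin (p + 1)) (Fin (p + 1)) ℝ) (j : Fin (p + 1))
    (f : MvPolynomial (Fin (p + 1)) ℝ) :
    pderiv j (matrixAct p M f) = ∑ i, C (M i j) * matrixAct p M (pderiv i f) := by
  classical
  unfold matrixAct
  rw [aux_chain]
  refine Finset.sum_congr rfl fun i _ => ?_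
  rw [map_sum, Finset.sum_eq_single j]
  · simp [mul_comm]
  · intro b _ hb
    simp [hb]
  · simp

lemma aux_lap_act {p : ℕ} (M : Matrix (Fin (p + 1)) (Fin (p + 1)) ℝ) (hM : M * Mᵀ = 1)
    (f : MvPolynomial (Fin (p + 1)) ℝ) :
    polyLaplacian p (matrixAct p M f) = matrixAct p M (polyLaplacian p f) := by
  classical
  have key : ∀ i k, ∑ j, M i j * M k j = if i = k then 1 else 0 := by
    intro i k
    have := congrFun (congrFun hM i) k
    simpa [Matrix.mul_apply, Matrix.one_apply] using this
  rw [aux_lap, aux_lap, map_sum]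
  simp only [aux_pderiv_act, map_sum, pderiv_C_mul, Finset.mul_sum]
  rw [Finset.sum_comm]
  refine Finset.sum_congr rfl fun i _ => ?_
  rw [Finset.sum_comm]
  have : ∀ k, ∑ j, C (M i j) * (C (M k j) * matrixAct p M (pderiv k (pderiv i f))) =
      C (∑ j, M i j * M k j) * matrixAct p M (pderiv k (pderiv i f)) := by
    intro k
    rw [map_sum, Finset.sum_mul]
    refine Finset.sum_congr rfl fun j _ => ?_
    rw [C_mul]; ring
  simp only [this, key]
  rw [Finset.sum_eq_single i]
  · simp
  · intro b _ hb
    simp [hb.symm]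
  · simp

lemma aux_act_mem {p n : ℕ} (M : Matrix (Fin (p + 1)) (Fin (p + 1)) ℝ) (hM : M * Mᵀ = 1)
    {f : MvPolynomial (Fin (p + 1)) ℝ} (hf : f ∈ harmonicHomogeneous p n) :
    matrixAct p M f ∈ harmonicHomogeneous p n := by
  obtain ⟨h1, h2⟩ := hf
  refine ⟨?_, ?_⟩
  · have h1' : polyLaplacian p f = 0 := h1
    show polyLaplacian p _ = 0
    rw [aux_lap_act M hM, h1', map_zero]
  · have h2' : f.IsHomogeneous n := h2
    show (matrixAct p M f).IsHomogeneous n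
    have := h2'.aeval (fun i => ∑ j : Fin (p + 1), C (M i j) * X j) (n := 1) ?_
    · simpa [matrixAct] using this
    · intro i
      exact IsHomogeneous.sum _ _ _ fun j _ => isHomogeneous_C_mul_X _ _

lemma aux_eval_smul {p n : ℕ} {f : MvPolynomial (Fin (p + 1)) ℝ} (hf : f.IsHomogeneous n)
    (t : ℝ) (x : Fin (p + 1) → ℝ) : eval (t • x) f = t ^ n * eval x f := by
  rw [eval_eq, eval_eq, Finset.mul_sum]
  refine Finset.sum_congr rfl fun d hd => ?_
  have h : ∏ i ∈ d.support, t ^ d i = t ^ n := by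
    rw [Finset.prod_pow_eq_pow_sum]
    congr 1
    exact (hf.degree_eq_sum_deg_support hd).symm
  simp only [Pi.smul_apply, smul_eq_mul, mul_pow, Finset.prod_mul_distrib, h]
  ring

/-- Householder reflection matrix. -/
noncomputable def auxRefl {p : ℕ} (v : Fin (p + 1) → ℝ) : Matrix (Fin (p + 1)) (Fin (p + 1)) ℝ :=
  1 - (2 / (v ⬝ᵥ v)) • vecMulVec v v

lemma auxRefl_mulVec {p : ℕ} (v x : Fin (p + 1) → ℝ) :
    auxRefl v *ᵥ x = x - (2 / (v ⬝ᵥ v) * (v ⬝ᵥ x)) • v := by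
  ext i
  simp [auxRefl, sub_mulVec, smul_mulVec, vecMulVec_mulVec]
  ring

lemma auxRefl_mul {p : ℕ} (v : Fin (p + 1) → ℝ) (hv : v ⬝ᵥ v ≠ 0) :
    auxRefl v * (auxRefl v)ᵀ = 1 := by
  have h1 : (auxRefl v)ᵀ = auxRefl v := by
    simp [auxRefl, transpose_vecMulVec]
  rw [h1]
  apply Matrix.ext_of_mulVec_single
  intro i
  rw [← mulVec_mulVec, auxRefl_mulVec, auxRefl_mulVec]
  simp only [dotProduct_sub, dotProduct_smul, smul_eq_mul, one_mulVec]
  ext j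
  simp
  field_simp
  ring

lemma auxRefl_det {p : ℕ} (v : Fin (p + 1) → ℝ) (hv : v ⬝ᵥ v ≠ 0) :
    (auxRefl v).det = -1 := by
  have : auxRefl v = 1 + replicateCol Unit (-(2 / (v ⬝ᵥ v)) • v) * replicateRow Unit v := by
    ext i j
    simp [auxRefl, vecMulVec_apply, Matrix.mul_apply, Matrix.one_apply]
    ring
  rw [this, det_one_add_replicateCol_mul_replicateRow]
  simp
  field_simp
  norm_num

lemma aux_orth {p : ℕ} (hp : 2 ≤ p) (x y : Fin (p + 1) → ℝ) :
    ∃ v : Fin (p + 1) → ℝ, v ⬝ᵥ v ≠ 0 ∧ v ⬝ᵥ x = 0 ∧ v ⬝ᵥ y = 0 := by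
  let A : Matrix (Fin 2) (Fin (p + 1)) ℝ := ![x, y]
  have hA : LinearMap.ker A.mulVecLin ≠ ⊥ := by
    apply LinearMap.ker_ne_bot_of_finrank_lt
    simp
    omega
  obtain ⟨v, hv, hv0⟩ := (Submodule.ne_bot_iff _).1 hA
  have hv' : A *ᵥ v = 0 := by simpa using hv
  refine ⟨v, ?_, ?_, ?_⟩
  · rwa [Ne, dotProduct_self_eq_zero]
  · rw [dotProduct_comm]; exact congrFun hv' 0
  · rw [dotProduct_comm]; exact congrFun hv' 1

lemma aux_trans {p : ℕ} (hp : 2 ≤ p) (x y e : Fin (p + 1) → ℝ) (hxy : x ⬝ᵥ x = y ⬝ᵥ y) :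
    ∃ M ∈ Matrix.specialOrthogonalGroup (Fin (p + 1)) ℝ, M *ᵥ x = y ∧
      (e ⬝ᵥ x = e ⬝ᵥ y → M *ᵥ e = e) := by
  by_cases h : x = y
  · subst h
    exact ⟨1, one_mem _, by simp, by simp⟩
  have hu : (x - y) ⬝ᵥ (x - y) ≠ 0 := by
    rw [Ne, dotProduct_self_eq_zero, sub_eq_zero]
    exact h
  obtain ⟨v, hv, hvy, hve⟩ := aux_orth hp y e
  refine ⟨auxRefl v * auxRefl (x - y), ?_, ?_, ?_⟩
  · rw [mem_specialOrthogonalGroup_iff, mem_orthogonalGroup_iff]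
    refine ⟨?_, ?_⟩
    · rw [transpose_mul,
        Matrix.mul_assoc, ← Matrix.mul_assoc (auxRefl (x - y)), auxRefl_mul _ hu, Matrix.one_mul,
        auxRefl_mul _ hv]
    · rw [det_mul, auxRefl_det _ hu, auxRefl_det _ hv]; norm_num
  · rw [← mulVec_mulVec]
    have : auxRefl (x - y) *ᵥ x = y := by
      rw [auxRefl_mulVec]
      have h1 : 2 / ((x - y) ⬝ᵥ (x - y)) * ((x - y) ⬝ᵥ x) = 1 := by
        field_simp
        simp only [sub_dotProduct, dotProduct_sub]
        rw [dotProduct_comm x y]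
        linarith
      rw [h1]; simp
    rw [this, auxRefl_mulVec, hvy]; simp
  · intro he
    rw [← mulVec_mulVec]
    have : auxRefl (x - y) *ᵥ e = e := by
      rw [auxRefl_mulVec]
      have h1 : (x - y) ⬝ᵥ e = 0 := by
        rw [dotProduct_comm, dotProduct_sub, he, sub_self]
      rw [h1]; simp
    rw [this, auxRefl_mulVec, hve]; simp

/-- The unit vector `e₀`. -/
noncomputable def auxE (p : ℕ) : Fin (p + 1) → ℝ := Pi.single 0 1

lemma auxE_dot {p : ℕ} (x : Fin (p + 1) → ℝ) : auxE p ⬝ᵥ x = x 0 := by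
  simp [auxE]

/-- Zonal polynomials: values depend only on the norm and the zeroth coordinate. -/
def AuxZonal {p : ℕ} (f : MvPolynomial (Fin (p + 1)) ℝ) : Prop :=
  ∀ x y : Fin (p + 1) → ℝ, x ⬝ᵥ x = y ⬝ᵥ y → x 0 = y 0 → eval x f = eval y f

/-- Restriction of a polynomial to the line `x + t e₀`. -/
noncomputable def auxLine {p : ℕ} (x : Fin (p + 1) → ℝ) (f : MvPolynomial (Fin (p + 1)) ℝ) :
    Polynomial ℝ :=
  aeval (fun i => Polynomial.C (x i) + Polynomial.C (auxE p i) * Polynomial.X) f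

lemma auxLine_eval {p : ℕ} (x : Fin (p + 1) → ℝ) (f : MvPolynomial (Fin (p + 1)) ℝ) (t : ℝ) :
    (auxLine x f).eval t = eval (x + t • auxE p) f := by
  induction f using MvPolynomial.induction_on with
  | C a => simp [auxLine]
  | add f h hf hh => simp_all [auxLine]
  | mul_X f k hf =>
    simp only [auxLine, map_mul, Polynomial.eval_mul] at hf ⊢
    rw [hf, aeval_X, eval_X]
    congr 1
    simp only [Polynomial.eval_add, Polynomial.eval_mul, Polynomial.eval_C, Polynomial.eval_X,
      Pi.add_apply, Pi.smul_apply, smul_eq_mul]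
    ring

lemma auxLine_derivative {p : ℕ} (x : Fin (p + 1) → ℝ) (f : MvPolynomial (Fin (p + 1)) ℝ) :
    Polynomial.derivative (auxLine x f) = auxLine x (pderiv 0 f) := by
  have := aux_chain (p := p) (Polynomial.derivative' (R := ℝ))
    (fun i => Polynomial.C (x i) + Polynomial.C (auxE p i) * Polynomial.X) f
  have h2 : Polynomial.derivative (auxLine x f) = Polynomial.derivative' (auxLine x f) := rfl
  rw [h2, auxLine, this, Finset.sum_eq_single 0]
  · simp [auxE, auxLine, Polynomial.derivative']
  · intro b _ hb
    simp [auxE, hb, Polynomial.derivative']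
  · simp

lemma aux_line_dot {p : ℕ} (x : Fin (p + 1) → ℝ) (t : ℝ) :
    (x + t • auxE p) ⬝ᵥ (x + t • auxE p) = x ⬝ᵥ x + 2 * t * x 0 + t ^ 2 := by
  simp only [dotProduct_add, add_dotProduct, smul_dotProduct, dotProduct_smul, smul_eq_mul,
    auxE_dot, dotProduct_comm x (auxE p)]
  simp [auxE]
  ring

lemma AuxZonal.pderiv {p : ℕ} {f : MvPolynomial (Fin (p + 1)) ℝ} (hf : AuxZonal f) :
    AuxZonal (pderiv 0 f) := by
  intro x y hxy h0
  have h : auxLine x f = auxLine y f := by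
    apply Polynomial.funext
    intro t
    rw [auxLine_eval, auxLine_eval]
    apply hf
    · rw [aux_line_dot, aux_line_dot, hxy, h0]
    · simp [h0]
  have h1 := congrArg (fun q => Polynomial.eval 0 (Polynomial.derivative q)) h
  simpa [auxLine_derivative, auxLine_eval] using h1

lemma aux_const_line {p : ℕ} {f : MvPolynomial (Fin (p + 1)) ℝ} (hf : pderiv 0 f = 0)
    (x : Fin (p + 1) → ℝ) (t : ℝ) : eval (x + t • auxE p) f = eval x f := by
  have h : Polynomial.derivative (auxLine x f) = 0 := by
    rw [auxLine_derivative, hf]; simp [auxLine]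
  have h2 := Polynomial.derivative_eq_zero.1 h
  rw [Polynomial.natDegree_eq_zero] at h2
  obtain ⟨c, hc⟩ := h2
  have h3 := auxLine_eval x f t
  have h4 := auxLine_eval x f 0
  rw [← hc] at h3 h4
  simp at h3 h4
  rw [← h3, ← h4]

/-- The polynomial `∑_{j ≥ 1} x_j²`. -/
noncomputable def auxR (p : ℕ) : MvPolynomial (Fin (p + 1)) ℝ := ∑ j : Fin p, X j.succ ^ 2

lemma auxR_pderiv_succ {p : ℕ} (j : Fin p) : pderiv j.succ (auxR p) = 2 * X j.succ := by
  classical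
  rw [auxR, map_sum, Finset.sum_eq_single j]
  · rw [pderiv_pow]; simp
  · intro b _ hb
    rw [pderiv_pow, pderiv_X_of_ne (by simpa using hb)]; simp
  · simp

lemma auxR_pderiv_zero {p : ℕ} : pderiv 0 (auxR p) = 0 := by
  rw [auxR, map_sum]
  refine Finset.sum_eq_zero fun j _ => ?_
  rw [pderiv_pow, pderiv_X_of_ne (Fin.succ_ne_zero j)]; simp

lemma auxR_lap {p : ℕ} (m : ℕ) :
    polyLaplacian p (auxR p ^ (m + 1)) =
      C ((2 * (m + 1) * (2 * m + p) : ℝ)) * auxR p ^ m := by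
  rw [aux_lap, Fin.sum_univ_succ, pderiv_pow, auxR_pderiv_zero]
  have h : ∀ j : Fin p, pderiv j.succ (pderiv j.succ (auxR p ^ (m + 1))) =
      C ((4 * (m + 1) * m : ℝ)) * auxR p ^ (m - 1) * X j.succ ^ 2 +
        C ((2 * (m + 1) : ℝ)) * auxR p ^ m := by
    intro j
    have e1 : pderiv j.succ (auxR p ^ (m + 1)) = C ((2 * (m + 1) : ℝ)) * (auxR p ^ m * X j.succ) := by
      rw [pderiv_pow, auxR_pderiv_succ]
      have : (C (2 : ℝ) : MvPolynomial (Fin (p + 1)) ℝ) = 2 := rfl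
      simp [this]
      ring
    rw [e1, pderiv_C_mul, pderiv_mul, pderiv_pow, auxR_pderiv_succ, pderiv_X_self]
    simp
    have : (C (4 : ℝ) : MvPolynomial (Fin (p + 1)) ℝ) = 4 := rfl
    have : (C (2 : ℝ) : MvPolynomial (Fin (p + 1)) ℝ) = 2 := rfl
    simp only [*]
    ring
  simp only [h, Finset.sum_add_distrib, ← Finset.mul_sum]
  rw [← auxR]
  have : (C (4 : ℝ) : MvPolynomial (Fin (p + 1)) ℝ) = 4 := rfl
  have : (C (2 : ℝ) : MvPolynomial (Fin (p + 1)) ℝ) = 2 := rfl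
  rcases m with _ | m
  · simp [*]
  · simp
    simp only [*]
    ring

lemma auxR_eval {p : ℕ} (x : Fin (p + 1) → ℝ) : eval x (auxR p) = ∑ j : Fin p, x j.succ ^ 2 := by
  simp [auxR]

lemma aux_zonal_indep {p n : ℕ} (hp : 2 ≤ p) {f : MvPolynomial (Fin (p + 1)) ℝ}
    (hf : f.IsHomogeneous (n + 1)) (hl : polyLaplacian p f = 0) (hz : AuxZonal f)
    (h0 : pderiv 0 f = 0) : f = 0 := by
  obtain ⟨q, rfl⟩ : ∃ q, p = q + 1 := ⟨p - 1, by omega⟩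
  let e1 : Fin (q + 1 + 1) → ℝ := Pi.single 1 1
  have key : ∀ x, ∀ r : ℝ, r ^ 2 = eval x (auxR (q + 1)) → eval x f = r ^ (n + 1) * eval e1 f := by
    intro x r hr
    rw [← aux_eval_smul hf, ← aux_const_line h0 x (- x 0)]
    apply hz
    · rw [aux_line_dot]
      have : x ⬝ᵥ x = x 0 ^ 2 + r ^ 2 := by
        rw [hr, auxR_eval, dotProduct, Fin.sum_univ_succ]
        simp [sq]
      rw [this]
      simp [e1]
      ring
    · simp [auxE, e1]
  have hnn : ∀ x : Fin (q + 1 + 1) → ℝ, 0 ≤ eval x (auxR (q + 1)) := by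
    intro x
    rw [auxR_eval]; positivity
  suffices hc : eval e1 f = 0 by
    apply MvPolynomial.funext
    intro x
    rw [key x _ (Real.sq_sqrt (hnn x)), hc]; simp
  rcases Nat.even_or_odd' (n + 1) with ⟨m, hm | hm⟩
  · obtain ⟨k, rfl⟩ : ∃ k, m = k + 1 := ⟨m - 1, by omega⟩
    have hfR : f = C (eval e1 f) * auxR (q + 1) ^ (k + 1) := by
      apply MvPolynomial.funext
      intro x
      rw [key x _ (Real.sq_sqrt (hnn x)), hm, pow_mul, Real.sq_sqrt (hnn x)]
      simp [mul_comm]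
    have h1 : eval e1 (polyLaplacian (q + 1) f) = 0 := by rw [hl]; simp
    rw [hfR, C_mul', map_smul, auxR_lap] at h1
    have h2 : eval e1 (auxR (q + 1)) = 1 := by
      rw [auxR_eval, Finset.sum_eq_single 0]
      · simp [e1]
      · intro b _ hb
        have : b.succ ≠ 1 := by
          rw [← Fin.succ_zero_eq_one]; exact fun h => hb (Fin.succ_injective _ h)
        simp [e1, this]
      · simp
    simp only [smul_eval, map_mul, eval_C, map_pow, h2, one_pow, mul_one] at h1
    rcases mul_eq_zero.1 h1 with h | h
    · exact h
    · exfalso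
      have : (0 : ℝ) < 2 * ((k : ℝ) + 1) * (2 * k + ((q + 1 : ℕ) : ℝ)) := by positivity
      exact this.ne' h
  · have h1 := key e1 _ (Real.sq_sqrt (hnn e1))
    have h2 := key e1 (-√(eval e1 (auxR (q + 1)))) (by rw [neg_sq]; exact Real.sq_sqrt (hnn e1))
    rw [Odd.neg_pow ⟨m, hm⟩] at h2
    linarith

lemma aux_zonal_unique {p : ℕ} (hp : 2 ≤ p) (n : ℕ) : ∀ {f : MvPolynomial (Fin (p + 1)) ℝ},
    f.IsHomogeneous n → polyLaplacian p f = 0 → AuxZonal f → eval (auxE p) f = 0 → f = 0 := by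
  induction n with
  | zero =>
    intro f hf _ _ h0
    rw [← totalDegree_zero_iff_isHomogeneous, totalDegree_eq_zero_iff_eq_C] at hf
    rw [hf] at h0 ⊢
    simpa using h0
  | succ n ih =>
    intro f hf hl hz h0
    refine aux_zonal_indep hp hf hl hz (ih ?_ ?_ hz.pderiv ?_)
    · simpa using hf.pderiv (i := 0)
    · rw [aux_lap_pderiv, hl, map_zero]
    · have h1 := congrArg (eval (auxE p)) hf.sum_X_mul_pderiv
      rw [map_sum, Finset.sum_eq_single 0] at h1
      · rw [map_mul, eval_X, map_nsmul, h0, smul_zero] at h1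
        simpa [auxE] using h1
      · intro b _ hb
        simp [auxE, hb]
      · simp

open MeasureTheory

/-- The closed Euclidean unit ball. -/
def auxBall (p : ℕ) : Set (Fin (p + 1) → ℝ) := {x | x ⬝ᵥ x ≤ 1}

lemma auxBall_continuous (p : ℕ) : Continuous fun x : Fin (p + 1) → ℝ => x ⬝ᵥ x := by
  unfold dotProduct
  fun_prop

lemma auxBall_compact (p : ℕ) : IsCompact (auxBall p) := by
  have hc : IsClosed (auxBall p) := isClosed_le (auxBall_continuous p) continuous_const
  refine (isCompact_Icc (a := fun _ : Fin (p + 1) => (-1 : ℝ)) (b := fun _ => 1)).of_isClosed_subset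
    hc ?_
  intro x hx
  have h : ∀ i, x i ^ 2 ≤ 1 := by
    intro i
    have h1 : x i * x i ≤ x ⬝ᵥ x :=
      Finset.single_le_sum (f := fun i => x i * x i) (fun j _ => mul_self_nonneg _)
        (Finset.mem_univ i)
    have h2 : x ⬝ᵥ x ≤ 1 := hx
    nlinarith
  constructor
  · intro i
    have := (sq_le_one_iff_abs_le_one _).1 (h i)
    exact (abs_le.1 this).1
  · intro i
    have := (sq_le_one_iff_abs_le_one _).1 (h i)
    exact (abs_le.1 this).2

lemma aux_integrable {p : ℕ} (f g : MvPolynomial (Fin (p + 1)) ℝ) :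
    IntegrableOn (fun x => eval x f * eval x g) (auxBall p) := by
  apply ContinuousOn.integrableOn_compact (auxBall_compact p)
  exact ((MvPolynomial.continuous_eval f).mul (MvPolynomial.continuous_eval g)).continuousOn

/-- The `L²` inner product on the unit ball. -/
noncomputable def auxB (p : ℕ) : LinearMap.BilinForm ℝ (MvPolynomial (Fin (p + 1)) ℝ) :=
  LinearMap.mk₂ ℝ (fun f g => ∫ x in auxBall p, eval x f * eval x g)
    (by
      intro f g h
      rw [← integral_add (aux_integrable f h) (aux_integrable g h)]
      simp [add_mul])
    (by
      intro c f g
      rw [smul_eq_mul, ← integral_const_mul]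
      simp [mul_assoc])
    (by
      intro f g h
      rw [← integral_add (aux_integrable f g) (aux_integrable f h)]
      simp [mul_add])
    (by
      intro c f g
      rw [smul_eq_mul, ← integral_const_mul]
      simp [mul_left_comm])

lemma auxB_apply {p : ℕ} (f g : MvPolynomial (Fin (p + 1)) ℝ) :
    auxB p f g = ∫ x in auxBall p, eval x f * eval x g := rfl

lemma auxB_comm {p : ℕ} (f g : MvPolynomial (Fin (p + 1)) ℝ) : auxB p f g = auxB p g f := by
  simp [auxB_apply, mul_comm]

lemma auxB_definite {p : ℕ} {f : MvPolynomial (Fin (p + 1)) ℝ} (h : auxB p f f = 0) : f = 0 := by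
  rw [auxB_apply, setIntegral_eq_zero_iff_of_nonneg_ae
    (Filter.Eventually.of_forall fun x => mul_self_nonneg _) (aux_integrable f f)] at h
  let U : Set (Fin (p + 1) → ℝ) := {x | x ⬝ᵥ x < 1}
  have hU : IsOpen U := isOpen_lt (auxBall_continuous p) continuous_const
  have hsub : U ⊆ auxBall p := by
    intro x hx
    have hx' : x ⬝ᵥ x < 1 := hx
    show x ⬝ᵥ x ≤ 1
    exact hx'.le
  have h2 := ae_restrict_of_ae_restrict_of_subset hsub h
  have h3 := Measure.eqOn_open_of_ae_eq h2 hU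
    ((MvPolynomial.continuous_eval f).mul (MvPolynomial.continuous_eval f)).continuousOn
    continuousOn_const
  apply MvPolynomial.funext_set (fun _ => Set.Ioo (0 : ℝ) (1 / (p + 1)))
    (fun _ => Set.Ioo_infinite (by positivity))
  intro x hx
  have hxU : x ∈ U := by
    show x ⬝ᵥ x < 1
    have : x ⬝ᵥ x < ∑ i : Fin (p + 1), (1 / (p + 1) : ℝ) := by
      refine Finset.sum_lt_sum_of_nonempty Finset.univ_nonempty fun i _ => ?_
      obtain ⟨h1, h2⟩ := hx i (Set.mem_univ i)
      have : (1 / (p + 1) : ℝ) ≤ 1 := by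
        rw [div_le_one (by positivity)]
        have : (0 : ℝ) ≤ p := by positivity
        linarith
      nlinarith
    refine this.trans_le ?_
    simp
    field_simp
    rfl
  have := h3 hxU
  simpa using this

lemma auxB_act {p : ℕ} {M : Matrix (Fin (p + 1)) (Fin (p + 1)) ℝ}
    (hM : M ∈ Matrix.specialOrthogonalGroup (Fin (p + 1)) ℝ)
    (f g : MvPolynomial (Fin (p + 1)) ℝ) :
    auxB p (matrixAct p M f) (matrixAct p M g) = auxB p f g := by
  rw [mem_specialOrthogonalGroup_iff, mem_orthogonalGroup_iff'] at hM
  obtain ⟨hO, hd⟩ := hM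
  have hmp : MeasurePreserving (Matrix.toLin' M) volume volume := by
    refine ⟨(LinearMap.continuous_of_finiteDimensional _).measurable, ?_⟩
    rw [Real.map_matrix_volume_pi_eq_smul_volume_pi (by rw [hd]; norm_num), hd]
    simp
  have hemb : MeasurableEmbedding (Matrix.toLin' M) := by
    apply Continuous.measurableEmbedding (LinearMap.continuous_of_finiteDimensional _)
    intro x y hxy
    have := congrArg (fun z => Mᵀ *ᵥ z) hxy
    simpa [mulVec_mulVec, hO] using this
  have hpre : (Matrix.toLin' M) ⁻¹' (auxBall p) = auxBall p := by
    ext x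
    simp only [auxBall, Set.mem_preimage, Set.mem_ofPred_eq, Matrix.toLin'_apply]
    have : (M *ᵥ x) ⬝ᵥ (M *ᵥ x) = x ⬝ᵥ x := by
      rw [dotProduct_mulVec, vecMul_mulVec, hO]
      simp
    rw [this]
  rw [auxB_apply, auxB_apply,
    ← hmp.setIntegral_preimage_emb hemb (fun x => eval x f * eval x g) (auxBall p), hpre]
  simp [aux_eval_act]

lemma aux_proj {p : ℕ} (K : Submodule ℝ (MvPolynomial (Fin (p + 1)) ℝ)) [FiniteDimensional ℝ K]
    (g : MvPolynomial (Fin (p + 1)) ℝ) : ∃ k ∈ K, ∀ l ∈ K, auxB p (g - k) l = 0 := by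
  let T : K →ₗ[ℝ] Module.Dual ℝ K := (auxB p).domRestrict₁₂ K K
  have hinj : Function.Injective T := by
    rw [← LinearMap.ker_eq_bot, LinearMap.ker_eq_bot']
    intro k hk
    have : auxB p k k = 0 := LinearMap.congr_fun hk k
    exact Subtype.ext (auxB_definite this)
  have hsurj := (LinearMap.injective_iff_surjective_of_finrank_eq_finrank
    (Subspace.dual_finrank_eq (K := ℝ) (V := K)).symm).1 hinj
  obtain ⟨k, hk⟩ := hsurj ((auxB p g).domRestrict K)
  refine ⟨k, k.2, fun l hl => ?_⟩
  have : auxB p k l = auxB p g l := LinearMap.congr_fun hk ⟨l, hl⟩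
  rw [map_sub, LinearMap.sub_apply, this, sub_self]

lemma aux_inv {p : ℕ} {M : Matrix (Fin (p + 1)) (Fin (p + 1)) ℝ}
    (hM : M ∈ Matrix.specialOrthogonalGroup (Fin (p + 1)) ℝ) :
    Mᵀ ∈ Matrix.specialOrthogonalGroup (Fin (p + 1)) ℝ ∧ M * Mᵀ = 1 ∧ Mᵀ * M = 1 := by
  rw [mem_specialOrthogonalGroup_iff] at hM ⊢
  have h1 := (mem_orthogonalGroup_iff _ _).1 hM.1
  have h2 := (mem_orthogonalGroup_iff' _ _).1 hM.1
  refine ⟨⟨?_, by rw [det_transpose, hM.2]⟩, h1, h2⟩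
  rw [mem_orthogonalGroup_iff, transpose_transpose]
  exact h2

lemma aux_act_act {p : ℕ} {M N : Matrix (Fin (p + 1)) (Fin (p + 1)) ℝ} (h : M * N = 1)
    (f : MvPolynomial (Fin (p + 1)) ℝ) : matrixAct p N (matrixAct p M f) = f := by
  apply MvPolynomial.funext
  intro x
  rw [aux_eval_act, aux_eval_act, mulVec_mulVec, h, one_mulVec]

lemma aux_adj {p : ℕ} {M : Matrix (Fin (p + 1)) (Fin (p + 1)) ℝ}
    (hM : M ∈ Matrix.specialOrthogonalGroup (Fin (p + 1)) ℝ)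
    (f g : MvPolynomial (Fin (p + 1)) ℝ) :
    auxB p (matrixAct p M f) g = auxB p f (matrixAct p Mᵀ g) := by
  conv_lhs => rw [← aux_act_act (aux_inv hM).2.2 g]
  exact auxB_act hM _ _

lemma aux_findim {p n : ℕ} {U : Submodule ℝ (MvPolynomial (Fin (p + 1)) ℝ)}
    (hU : U ≤ harmonicHomogeneous p n) : FiniteDimensional ℝ U := by
  have h1 : FiniteDimensional ℝ (homogeneousSubmodule (Fin (p + 1)) ℝ n) :=
    Module.Finite.iff_fg.2 (homogeneousSubmodule_fg _ _ n)
  exact Submodule.finiteDimensional_of_le (hU.trans inf_le_right)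

lemma aux_exists_zonal {p n : ℕ} (hp : 2 ≤ p)
    (U : Submodule ℝ (MvPolynomial (Fin (p + 1)) ℝ))
    (hU : U ≤ harmonicHomogeneous p n)
    (hinv : ∀ M ∈ Matrix.specialOrthogonalGroup (Fin (p + 1)) ℝ,
      ∀ f ∈ U, matrixAct p M f ∈ U) (h0 : U ≠ ⊥) :
    ∃ z ∈ U, AuxZonal z ∧ eval (auxE p) z ≠ 0 := by
  obtain ⟨f, hf, hf0⟩ := (Submodule.ne_bot_iff _).1 h0
  obtain ⟨x, hx⟩ : ∃ x, eval x f ≠ 0 := by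
    by_contra! h
    exact hf0 (MvPolynomial.funext fun x => by rw [h x, map_zero])
  have hxx : 0 ≤ x ⬝ᵥ x := Finset.sum_nonneg fun i _ => mul_self_nonneg (x i)
  obtain ⟨M, hM, hMx, -⟩ := aux_trans hp (√(x ⬝ᵥ x) • auxE p) x 0 (by
    rw [smul_dotProduct, dotProduct_smul, auxE_dot]
    simp [auxE, Real.mul_self_sqrt hxx])
  obtain ⟨g, hg, hge⟩ : ∃ g ∈ U, eval (auxE p) g ≠ 0 := by
    refine ⟨matrixAct p M f, hinv M hM f hf, fun h => hx ?_⟩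
    rw [← hMx, ← aux_eval_act, aux_eval_smul (hU (hinv M hM f hf)).2, h, mul_zero]
  let K : Submodule ℝ (MvPolynomial (Fin (p + 1)) ℝ) :=
    U ⊓ LinearMap.ker (MvPolynomial.aeval (R := ℝ) (auxE p)).toLinearMap
  have hKmem : ∀ k, k ∈ K ↔ k ∈ U ∧ eval (auxE p) k = 0 := by
    intro k
    simp [K, MvPolynomial.aeval_eq_eval]
  have hKU : K ≤ U := inf_le_left
  have : FiniteDimensional ℝ K := aux_findim (hKU.trans hU)
  obtain ⟨k, hk, hort⟩ := aux_proj K g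
  have hzU : g - k ∈ U := U.sub_mem hg (hKU hk)
  refine ⟨g - k, hzU, ?_, ?_⟩
  · have hfix : ∀ N ∈ Matrix.specialOrthogonalGroup (Fin (p + 1)) ℝ, N *ᵥ auxE p = auxE p →
        matrixAct p N (g - k) = g - k := by
      intro N hN hNe
      have hd : matrixAct p N (g - k) - (g - k) ∈ K := by
        rw [hKmem]
        refine ⟨U.sub_mem (hinv N hN _ hzU) hzU, ?_⟩
        rw [map_sub, aux_eval_act, hNe, sub_self]
      rw [← sub_eq_zero]
      apply auxB_definite
      have hT : matrixAct p Nᵀ (matrixAct p N (g - k) - (g - k)) ∈ K := by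
        rw [hKmem]
        refine ⟨hinv _ (aux_inv hN).1 _ (hKU hd), ?_⟩
        have hNe' : Nᵀ *ᵥ auxE p = auxE p := by
          conv_lhs => rw [← hNe, mulVec_mulVec, (aux_inv hN).2.2, one_mulVec]
        rw [aux_eval_act, hNe']
        exact ((hKmem _).1 hd).2
      have hsub : ∀ a b c, auxB p (a - b) c = auxB p a c - auxB p b c := by
        intro a b c
        rw [LinearMap.map_sub, LinearMap.sub_apply]
      rw [hsub, aux_adj hN, hort _ hT, hort _ hd, sub_self]
    intro x y hxy hx0
    obtain ⟨N, hN, hNx, hNe⟩ := aux_trans hp x y (auxE p) hxy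
    rw [← hNx, ← aux_eval_act, hfix N hN (hNe (by rw [auxE_dot, auxE_dot, hx0]))]
  · rw [map_sub, ((hKmem k).1 hk).2, sub_zero]
    exact hge

end Aux

/-- For `p ≥ 2` and any `n`, the natural representation of `SO(p+1, ℝ)` on the space of
spherical harmonics of degree `n` on `S^p` is irreducible: every invariant subspace is trivial
or everything. -/
theorem spherical_harmonics_irreducible (p n : ℕ) (hp : 2 ≤ p)
    (W : Submodule ℝ (MvPolynomial (Fin (p + 1)) ℝ))
    (hW : W ≤ harmonicHomogeneous p n)
    (hinv : ∀ M ∈ Matrix.specialOrthogonalGroup (Fin (p + 1)) ℝ,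
      ∀ f ∈ W, matrixAct p M f ∈ W) :
    W = ⊥ ∨ W = harmonicHomogeneous p n := by
  by_contra! hcon
  obtain ⟨hb, ht⟩ := hcon
  have : FiniteDimensional ℝ W := aux_findim hW
  let W' : Submodule ℝ (MvPolynomial (Fin (p + 1)) ℝ) :=
    harmonicHomogeneous p n ⊓ (auxB p).orthogonal W
  have hmem : ∀ f, f ∈ W' ↔ f ∈ harmonicHomogeneous p n ∧ ∀ w ∈ W, auxB p w f = 0 :=
    fun f => Iff.rfl
  have hinv' : ∀ M ∈ Matrix.specialOrthogonalGroup (Fin (p + 1)) ℝ,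
      ∀ f ∈ W', matrixAct p M f ∈ W' := by
    intro M hM f hf
    rw [hmem] at hf ⊢
    refine ⟨aux_act_mem M (aux_inv hM).2.1 hf.1, fun w hw => ?_⟩
    rw [auxB_comm, aux_adj hM, auxB_comm]
    exact hf.2 _ (hinv _ (aux_inv hM).1 w hw)
  have hb' : W' ≠ ⊥ := by
    intro hbot
    apply ht
    refine le_antisymm hW fun h hh => ?_
    obtain ⟨k, hk, hort⟩ := aux_proj W h
    have h1 : h - k ∈ W' := by
      rw [hmem]
      exact ⟨Submodule.sub_mem _ hh (hW hk), fun w hw => by rw [auxB_comm]; exact hort w hw⟩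
    rw [hbot, Submodule.mem_bot, sub_eq_zero] at h1
    rw [h1]; exact hk
  obtain ⟨z, hz, hzz, hze⟩ := aux_exists_zonal hp W hW hinv hb
  obtain ⟨y, hy, hyz, hye⟩ := aux_exists_zonal hp W' inf_le_left hinv' hb'
  set a := eval (auxE p) z with ha
  set b := eval (auxE p) y with hbdef
  have hcomb : b • z - a • y ∈ harmonicHomogeneous p n :=
    Submodule.sub_mem _ (Submodule.smul_mem _ _ (hW hz))
      (Submodule.smul_mem _ _ ((hmem y).1 hy).1)
  have h0 : b • z - a • y = 0 := by
    refine aux_zonal_unique hp n hcomb.2 hcomb.1 ?_ ?_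
    · intro u v huv h0
      simp only [map_sub, smul_eval]
      rw [hzz u v huv h0, hyz u v huv h0]
    · simp only [map_sub, smul_eval, ← ha, ← hbdef]
      ring
  have hzW' : b • z ∈ W' := by
    rw [sub_eq_zero.1 h0]
    exact W'.smul_mem _ hy
  have h2 := ((hmem _).1 hzW').2 z hz
  rw [map_smul, smul_eq_mul] at h2
  have hz0 : z = 0 := auxB_definite ((mul_eq_zero.1 h2).resolve_left hye)
  apply hze
  rw [ha, hz0, map_zero]
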